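/- (Unique continuation.) Let (η, ϕ) be a smooth solution of the two-dimensional water-wave system on [0,T], with (conserved) energy 𝓗 := 𝓗(0). Assume there exist positive constants A, B such that B < 2/7, T ≥ (4/(2 − 7B))·(1 + 5L₁A/√g), sup_{t∈[0,T]} ‖∂ₓη(t,·)‖_{L^∞([0,L₁])} ≤ B and sup_{t∈[0,T]} ‖∂ₓψ(t,·)‖_{L²([0,L₁])} ≤ A·√(2𝓗). If moreover η(t,L₁) = 0 for every t ∈ [0,T], then 𝓗 = 0; consequently η(t,x) = 0 and ∂ₓϕ(t,x,y) = ∂_yϕ(t,x,y) = 0 for all t ∈ [0,T] and all (x,y) ∈ Ω(t). -/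

import Mathlib

open Real Set MeasureTheory

noncomputable section

/-- `∂ₓϕ(t,x,y)` -/
def phiX (ϕ : ℝ → ℝ → ℝ → ℝ) (t x y : ℝ) : ℝ := deriv (fun x' => ϕ t x' y) x

/-- `∂_yϕ(t,x,y)` -/
def phiY (ϕ : ℝ → ℝ → ℝ → ℝ) (t x y : ℝ) : ℝ := deriv (fun y' => ϕ t x y') y

/-- `∂ₜϕ(t,x,y)` -/
def phiT (ϕ : ℝ → ℝ → ℝ → ℝ) (t x y : ℝ) : ℝ := deriv (fun s => ϕ s x y) t

/-- `∂ₓη(t,x)` -/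
def etaX (η : ℝ → ℝ → ℝ) (t x : ℝ) : ℝ := deriv (fun x' => η t x') x

/-- `∂ₜη(t,x)` -/
def etaT (η : ℝ → ℝ → ℝ) (t x : ℝ) : ℝ := deriv (fun s => η s x) t

/-- the trace `ψ(t,x) = ϕ(t,x,η(t,x))` -/
def psi (η : ℝ → ℝ → ℝ) (ϕ : ℝ → ℝ → ℝ → ℝ) (t x : ℝ) : ℝ := ϕ t x (η t x)

/-- `∂ₜψ(t,x)` -/
def psiT (η : ℝ → ℝ → ℝ) (ϕ : ℝ → ℝ → ℝ → ℝ) (t x : ℝ) : ℝ :=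
  deriv (fun s => psi η ϕ s x) t

/-- `∂ₓψ(t,x)` -/
def psiX (η : ℝ → ℝ → ℝ) (ϕ : ℝ → ℝ → ℝ → ℝ) (t x : ℝ) : ℝ :=
  deriv (fun x' => psi η ϕ t x') x

/-- `Θ(t,x) = -η ∂ₜψ - (g/2) η²` -/
def Theta (g : ℝ) (η : ℝ → ℝ → ℝ) (ϕ : ℝ → ℝ → ℝ → ℝ) (t x : ℝ) : ℝ :=
  -(η t x) * psiT η ϕ t x - g / 2 * (η t x) ^ 2

/-- the energy `𝓗(t)` -/
def energy2D (L₁ h g : ℝ) (η : ℝ → ℝ → ℝ) (ϕ : ℝ → ℝ → ℝ → ℝ) (t : ℝ) : ℝ :=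
  g / 2 * (∫ x in (0:ℝ)..L₁, (η t x) ^ 2)
    + 1 / 2 * ∫ x in (0:ℝ)..L₁, ∫ y in (-h)..(η t x),
        ((phiX ϕ t x y) ^ 2 + (phiY ϕ t x y) ^ 2)

/-- A smooth solution of the two-dimensional water-wave system on `[0,T]`:
`η : [0,T] × [0,L₁] → ℝ` and `ϕ` on the fluid domain (both given as smooth total
functions), satisfying the incompressibility, boundary, kinematic and Bernoulli
(dynamic) conditions, together with `η ≥ -h/2`, zero mean, and the right-angle
contact conditions `∂ₓη(t,0) = ∂ₓη(t,L₁) = 0`. -/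
structure IsWW2D (L₁ h g T : ℝ) (η : ℝ → ℝ → ℝ) (ϕ : ℝ → ℝ → ℝ → ℝ) : Prop where
  smooth_eta : ContDiff ℝ (⊤ : ℕ∞) (fun p : ℝ × ℝ => η p.1 p.2)
  smooth_phi : ContDiff ℝ (⊤ : ℕ∞) (fun p : ℝ × ℝ × ℝ => ϕ p.1 p.2.1 p.2.2)
  eta_lower : ∀ t ∈ Icc (0:ℝ) T, ∀ x ∈ Icc (0:ℝ) L₁, -h / 2 ≤ η t x
  eta_mean : ∀ t ∈ Icc (0:ℝ) T, (∫ x in (0:ℝ)..L₁, η t x) = 0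
  laplace : ∀ t ∈ Icc (0:ℝ) T, ∀ x ∈ Icc (0:ℝ) L₁, ∀ y ∈ Icc (-h) (η t x),
    deriv (fun x' => phiX ϕ t x' y) x + deriv (fun y' => phiY ϕ t x y') y = 0
  bc_left : ∀ t ∈ Icc (0:ℝ) T, ∀ y ∈ Icc (-h) (η t 0), phiX ϕ t 0 y = 0
  bc_right : ∀ t ∈ Icc (0:ℝ) T, ∀ y ∈ Icc (-h) (η t L₁), phiX ϕ t L₁ y = 0
  bc_bottom : ∀ t ∈ Icc (0:ℝ) T, ∀ x ∈ Icc (0:ℝ) L₁, phiY ϕ t x (-h) = 0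
  kinematic : ∀ t ∈ Icc (0:ℝ) T, ∀ x ∈ Icc (0:ℝ) L₁,
    etaT η t x = phiY ϕ t x (η t x) - etaX η t x * phiX ϕ t x (η t x)
  bernoulli : ∀ t ∈ Icc (0:ℝ) T, ∀ x ∈ Icc (0:ℝ) L₁,
    phiT ϕ t x (η t x)
      + 1 / 2 * ((phiX ϕ t x (η t x)) ^ 2 + (phiY ϕ t x (η t x)) ^ 2) + g * η t x = 0
  etaX_left : ∀ t ∈ Icc (0:ℝ) T, etaX η t 0 = 0
  etaX_right : ∀ t ∈ Icc (0:ℝ) T, etaX η t L₁ = 0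

/-! The energy `𝓗` is conserved. Consider the virial functional `M = ∫ (x η ∂ₓψ + η ψ / 4) dx`. By
the kinematic and Bernoulli equations the momentum density changes at the rate
`∂ₜη ∂ₓψ - ∂ₓη ∂ₜψ`, which is the flux of the stress tensor of `∇ϕ` through the surface plus the
work `g η ∂ₓη` of gravity; since `η` vanishes at the wall `x = L₁`, no boundary term survives in
`M'`. A Rellich-Pohozaev identity with the multiplier `(x, y - 7/4 η)` turns the flux into an
integral over the fluid, where the slope bound and the signs of the contributions of the wall and
the bottom give `M' ≥ (2 - 7B)/4 · 𝓗`. On the other hand `η` has mean zero, so the Cauchy-Schwarz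
inequality yields `|M| ≤ (5/2) L₁ A / √g · 𝓗`. Over a time as long as `T` the two are
incompatible unless `𝓗 = 0`. -/

section Integrals

variable {a b : ℝ} {f k : ℝ → ℝ}

theorem intervalIntegral_congr_Icc (hab : a ≤ b) (hfk : ∀ x ∈ Icc a b, f x = k x) :
    ∫ x in a..b, f x = ∫ x in a..b, k x :=
  intervalIntegral.integral_congr fun x hx => hfk x (uIcc_of_le hab ▸ hx)

theorem intervalIntegral_mono_Icc (hf : Continuous f) (hk : Continuous k) (hab : a ≤ b)
    (hfk : ∀ x ∈ Icc a b, f x ≤ k x) : ∫ x in a..b, f x ≤ ∫ x in a..b, k x :=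
  intervalIntegral.integral_mono_on hab (hf.intervalIntegrable a b) (hk.intervalIntegrable a b) hfk

theorem eq_zero_of_intervalIntegral_eq_zero (hf : Continuous f) (hab : a < b)
    (hf_nonneg : ∀ x ∈ Icc a b, 0 ≤ f x) (hint : ∫ x in a..b, f x = 0) :
    ∀ x ∈ Icc a b, f x = 0 := by
  intro x hx
  by_contra hne
  exact (intervalIntegral.integral_pos hab hf.continuousOn
    (fun y hy => hf_nonneg y (Ioc_subset_Icc_self hy))
    ⟨x, hx, (hf_nonneg x hx).lt_of_ne' hne⟩).ne' hint

theorem integral_abs_mul_abs_le_sqrt_mul_sqrt (hf : Continuous f) (hk : Continuous k)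
    (hab : a ≤ b) :
    ∫ x in a..b, |f x| * |k x| ≤ √(∫ x in a..b, f x ^ 2) * √(∫ x in a..b, k x ^ 2) := by
  have memLp {u : ℝ → ℝ} (hu : Continuous u) :
      MemLp u (ENNReal.ofReal 2) (volume.restrict (Ioc a b)) := by
    rw [ENNReal.ofReal_ofNat, memLp_two_iff_integrable_sq hu.aestronglyMeasurable]
    exact (hu.pow 2).integrableOn_Ioc
  simpa [Real.sqrt_eq_rpow, intervalIntegral.integral_of_le hab] using
    integral_mul_norm_le_Lp_mul_Lq Real.HolderConjugate.two_two (memLp hf) (memLp hk)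

theorem integral_abs_le_sqrt_mul_sqrt (hf : Continuous f) (hab : a ≤ b) :
    ∫ x in a..b, |f x| ≤ √(b - a) * √(∫ x in a..b, f x ^ 2) := by
  simpa using integral_abs_mul_abs_le_sqrt_mul_sqrt (continuous_const (y := (1 : ℝ))) hf hab

-- Since `f` has mean zero, only the variation of `p` matters, which is at most `∫ |p'|`.
theorem abs_integral_mul_le_of_integral_eq_zero {p : ℝ → ℝ} (hf : Continuous f)
    (hp : ContDiff ℝ 1 p) (hab : a ≤ b) (hmean : ∫ x in a..b, f x = 0) :
    |∫ x in a..b, f x * p x|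
      ≤ (b - a) * √(∫ x in a..b, f x ^ 2) * √(∫ x in a..b, deriv p x ^ 2) := by
  have hp' : Continuous (deriv p) := hp.continuous_deriv le_rfl
  have variation : ∀ x ∈ Icc a b, |p x - p a| ≤ ∫ s in a..b, |deriv p s| := fun x hx => by
    rw [← intervalIntegral.integral_deriv_eq_sub'
      (f' := deriv p) p rfl (fun s _ => hp.differentiable one_ne_zero s) hp'.continuousOn]
    exact (intervalIntegral.abs_integral_le_integral_abs hx.1).trans
      (intervalIntegral.integral_mono_interval le_rfl hx.1 hx.2
        (ae_of_all _ fun s => abs_nonneg _) (hp'.abs.intervalIntegrable a b))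
  have recentre : ∫ x in a..b, f x * p x = ∫ x in a..b, f x * (p x - p a) := by
    simp only [mul_sub]
    rw [intervalIntegral.integral_sub ((by fun_prop : Continuous _).intervalIntegrable a b)
      ((by fun_prop : Continuous _).intervalIntegrable a b), intervalIntegral.integral_mul_const,
      hmean, zero_mul, sub_zero]
  calc |∫ x in a..b, f x * p x|
      ≤ ∫ x in a..b, |f x| * ∫ s in a..b, |deriv p s| := by
        rw [recentre]
        refine (intervalIntegral.abs_integral_le_integral_abs hab).trans
          (intervalIntegral_mono_Icc (by fun_prop) (by fun_prop) hab
            fun x hx => ?_)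
        rw [abs_mul]
        exact mul_le_mul_of_nonneg_left (variation x hx) (abs_nonneg _)
    _ = (∫ x in a..b, |f x|) * ∫ s in a..b, |deriv p s| := intervalIntegral.integral_mul_const _ _
    _ ≤ (√(b - a) * √(∫ x in a..b, f x ^ 2)) * (√(b - a) * √(∫ x in a..b, deriv p x ^ 2)) :=
        mul_le_mul (integral_abs_le_sqrt_mul_sqrt hf hab) (integral_abs_le_sqrt_mul_sqrt hp' hab)
          (intervalIntegral.integral_nonneg hab fun x _ => abs_nonneg _) (by positivity)
    _ = (b - a) * √(∫ x in a..b, f x ^ 2) * √(∫ x in a..b, deriv p x ^ 2) := by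
        rw [mul_mul_mul_comm, Real.mul_self_sqrt (sub_nonneg.2 hab), mul_assoc]

theorem integral_id_mul_mul_deriv (hf : ContDiff ℝ 1 f) (hfb : f b = 0) :
    ∫ x in (0 : ℝ)..b, x * (f x * deriv f x) = -(1 / 2 * ∫ x in (0 : ℝ)..b, f x ^ 2) := by
  rw [← intervalIntegral.integral_const_mul, eq_neg_iff_add_eq_zero,
    ← intervalIntegral.integral_add ((by fun_prop : Continuous _).intervalIntegrable _ _)
      ((by fun_prop : Continuous _).intervalIntegrable _ _),
    intervalIntegral.integral_eq_sub_of_hasDerivAt (f := fun x => x * (f x ^ 2 / 2))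
      (fun x _ => ?_) ((by fun_prop : Continuous _).intervalIntegrable _ _), hfb]
  · ring
  · have hsq := ((hf.differentiable one_ne_zero x).hasDerivAt.pow 2).div_const 2
    exact ((hasDerivAt_id' x).mul hsq).congr_deriv (by simp only [Pi.pow_apply]; ring)

end Integrals

section PartialDerivatives

/-- The partial derivative of a function of two variables in its first variable: `∂ₓ` for a
potential at a fixed time, `∂ₜ` for the surface elevation `η`, so that `etaT` is `partialX` and
`phiX ϕ t` is `partialX (ϕ t)` by definition. -/
def partialX (f : ℝ → ℝ → ℝ) (x y : ℝ) : ℝ := deriv (fun s => f s y) x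

/-- The partial derivative of a function of two variables in its second variable: `∂_y` for a
potential at a fixed time, `∂ₓ` for the surface elevation `η`, so that `etaX` is `partialY` and
`phiY ϕ t` is `partialY (ϕ t)` by definition. -/
def partialY (f : ℝ → ℝ → ℝ) (x y : ℝ) : ℝ := deriv (fun s => f x s) y

theorem contDiff_deriv_param {E F : Type*} [NormedAddCommGroup E] [NormedSpace ℝ E]
    [NormedAddCommGroup F] [NormedSpace ℝ F] {m n : WithTop ℕ∞} {f : E → ℝ → F} {c : E → ℝ}
    (hf : ContDiff ℝ m ↿f) (hc : ContDiff ℝ n c) (hnm : n + 1 ≤ m) :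
    ContDiff ℝ n fun p => deriv (f p) (c p) :=
  (hf.fderiv hc hnm).clm_apply contDiff_const

variable {m n : WithTop ℕ∞} {f k : ℝ → ℝ → ℝ} {q : ℝ → ℝ → ℝ → ℝ}

theorem contDiff_partialX (hf : ContDiff ℝ m ↿f) (hnm : n + 1 ≤ m) : ContDiff ℝ n ↿(partialX f) :=
  contDiff_deriv_param (f := fun (p : ℝ × ℝ) s => f s p.2)
    (hf.comp (contDiff_snd.prodMk (contDiff_snd.comp contDiff_fst))) contDiff_fst hnm

theorem contDiff_partialY (hf : ContDiff ℝ m ↿f) (hnm : n + 1 ≤ m) : ContDiff ℝ n ↿(partialY f) :=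
  contDiff_deriv_param (f := fun (p : ℝ × ℝ) s => f p.1 s)
    (hf.comp ((contDiff_fst.comp contDiff_fst).prodMk contDiff_snd)) contDiff_snd hnm

theorem contDiff_phiX (hq : ContDiff ℝ m ↿q) (hnm : n + 1 ≤ m) : ContDiff ℝ n ↿(phiX q) :=
  contDiff_deriv_param (f := fun (p : ℝ × ℝ × ℝ) s => q p.1 s p.2.2)
    (by fun_prop) (contDiff_fst.comp contDiff_snd) hnm

theorem contDiff_phiY (hq : ContDiff ℝ m ↿q) (hnm : n + 1 ≤ m) : ContDiff ℝ n ↿(phiY q) :=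
  contDiff_deriv_param (f := fun (p : ℝ × ℝ × ℝ) s => q p.1 p.2.1 s)
    (by fun_prop) (contDiff_snd.comp contDiff_snd) hnm

theorem contDiff_phiT (hq : ContDiff ℝ m ↿q) (hnm : n + 1 ≤ m) : ContDiff ℝ n ↿(phiT q) :=
  contDiff_deriv_param (f := fun (p : ℝ × ℝ × ℝ) s => q s p.2.1 p.2.2)
    (by fun_prop) contDiff_fst hnm

theorem contDiff_time_slice (hq : ContDiff ℝ n ↿q) (t : ℝ) : ContDiff ℝ n ↿(q t) :=
  hq.comp (contDiff_const.prodMk contDiff_id)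

theorem continuous_partialX (hf : ContDiff ℝ 1 ↿f) : Continuous ↿(partialX f) :=
  (contDiff_partialX (n := 0) hf (zero_add 1).le).continuous

theorem continuous_partialY (hf : ContDiff ℝ 1 ↿f) : Continuous ↿(partialY f) :=
  (contDiff_partialY (n := 0) hf (zero_add 1).le).continuous

theorem continuous_phiT (hq : ContDiff ℝ 1 ↿q) : Continuous ↿(phiT q) :=
  (contDiff_phiT (n := 0) hq (zero_add 1).le).continuous

theorem hasDerivAt_partialX (hf : ContDiff ℝ 1 ↿f) (x y : ℝ) :
    HasDerivAt (fun s => f s y) (partialX f x y) x :=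
  ((by fun_prop : ContDiff ℝ 1 fun s => f s y).differentiable one_ne_zero x).hasDerivAt

theorem hasDerivAt_partialY (hf : ContDiff ℝ 1 ↿f) (x y : ℝ) :
    HasDerivAt (fun s => f x s) (partialY f x y) y :=
  ((by fun_prop : ContDiff ℝ 1 fun s => f x s).differentiable one_ne_zero y).hasDerivAt

theorem hasDerivAt_phiT (hq : ContDiff ℝ 1 ↿q) (t x y : ℝ) :
    HasDerivAt (fun s => q s x y) (phiT q t x y) t :=
  ((by fun_prop : ContDiff ℝ 1 fun s => q s x y).differentiable one_ne_zero t).hasDerivAt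

theorem partialX_mul (hf : ContDiff ℝ 1 ↿f) (hk : ContDiff ℝ 1 ↿k) (x y : ℝ) :
    partialX (fun x y => f x y * k x y) x y = partialX f x y * k x y + f x y * partialX k x y :=
  ((hasDerivAt_partialX hf x y).mul (hasDerivAt_partialX hk x y)).deriv

theorem partialY_mul (hf : ContDiff ℝ 1 ↿f) (hk : ContDiff ℝ 1 ↿k) (x y : ℝ) :
    partialY (fun x y => f x y * k x y) x y = partialY f x y * k x y + f x y * partialY k x y :=
  ((hasDerivAt_partialY hf x y).mul (hasDerivAt_partialY hk x y)).deriv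

theorem hasFDerivAt_partial (hf : ContDiff ℝ 1 ↿f) (p : ℝ × ℝ) :
    HasFDerivAt ↿f (partialX f p.1 p.2 • ContinuousLinearMap.fst ℝ ℝ ℝ
      + partialY f p.1 p.2 • ContinuousLinearMap.snd ℝ ℝ ℝ) p := by
  have hd := (hf.differentiable one_ne_zero p).hasFDerivAt
  have hX := hd.comp_hasDerivAt_of_eq p.1
    ((hasDerivAt_id p.1).prodMk (hasDerivAt_const p.1 p.2)) rfl
  have hY := hd.comp_hasDerivAt_of_eq p.2
    ((hasDerivAt_const p.2 p.1).prodMk (hasDerivAt_id p.2)) rfl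
  refine hd.congr_fderiv (ContinuousLinearMap.prod_ext (ContinuousLinearMap.ext_ring ?_)
    (ContinuousLinearMap.ext_ring ?_))
  · simpa using hX.unique (hasDerivAt_partialX hf p.1 p.2)
  · simpa using hY.unique (hasDerivAt_partialY hf p.1 p.2)

theorem hasDerivAt_along_graph (hf : ContDiff ℝ 1 ↿f) {e : ℝ → ℝ} {e' x : ℝ}
    (he : HasDerivAt e e' x) :
    HasDerivAt (fun s => f s (e s)) (partialX f x (e x) + e' * partialY f x (e x)) x := by
  have hchain := (hasFDerivAt_partial hf (x, e x)).comp_hasDerivAt_of_eq x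
    ((hasDerivAt_id x).prodMk he) rfl
  exact hchain.congr_deriv (by simp [mul_comm])

theorem partialX_partialY_comm (hf : ContDiff ℝ 2 ↿f) (x y : ℝ) :
    partialX (partialY f) x y = partialY (partialX f) x y := by
  have hf1 : ContDiff ℝ 1 ↿f := hf.of_le one_le_two
  have hX := hasFDerivAt_partial (contDiff_partialX hf one_add_one_eq_two.le) (x, y)
  have hY := hasFDerivAt_partial (contDiff_partialY hf one_add_one_eq_two.le) (x, y)
  have hsymm := second_derivative_symmetric (hasFDerivAt_partial hf1)
    ((hX.smul_const (ContinuousLinearMap.fst ℝ ℝ ℝ)).add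
      (hY.smul_const (ContinuousLinearMap.snd ℝ ℝ ℝ))) (1, 0) (0, 1)
  simpa using hsymm

theorem phiT_phiX_comm (hq : ContDiff ℝ 2 ↿q) (t x y : ℝ) :
    phiT (phiX q) t x y = phiX (phiT q) t x y :=
  partialX_partialY_comm (f := fun s z => q s z y) (by fun_prop) t x

theorem phiT_phiY_comm (hq : ContDiff ℝ 2 ↿q) (t x y : ℝ) :
    phiT (phiY q) t x y = phiY (phiT q) t x y :=
  partialX_partialY_comm (f := fun s z => q s x z) (by fun_prop) t y

end PartialDerivatives

section MovingDomain

variable {a b c : ℝ}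

theorem hasDerivAt_integral_param {F F' : ℝ → ℝ → ℝ}
    (hF : ∀ s x, HasDerivAt (fun r => F r x) (F' s x) s) (hFc : ∀ s, Continuous (F s))
    (hF'c : Continuous ↿F') (t : ℝ) :
    HasDerivAt (fun s => ∫ x in a..b, F s x) (∫ x in a..b, F' t x) t := by
  obtain ⟨C, hC⟩ := ((isCompact_Icc (a := t - 1) (b := t + 1)).prod
    (isCompact_uIcc (a := a) (b := b))).exists_bound_of_continuousOn hF'c.continuousOn
  exact (intervalIntegral.hasDerivAt_integral_of_dominated_loc_of_deriv_le
    (bound := fun _ => C) (Icc_mem_nhds (sub_one_lt t) (lt_add_one t))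
    (.of_forall fun s => (hFc s).aestronglyMeasurable) ((hFc t).intervalIntegrable a b)
    (by fun_prop : Continuous (F' t)).aestronglyMeasurable
    (.of_forall fun x hx s hs => hC (s, x) ⟨hs, uIoc_subset_uIcc hx⟩) intervalIntegrable_const
    (.of_forall fun x _ s _ => hF s x)).2

theorem hasDerivAt_integral_of_moving_endpoint {P : ℝ → ℝ → ℝ} (hP : ContDiff ℝ 1 ↿P)
    {e : ℝ → ℝ} {e' x : ℝ} (he : HasDerivAt e e' x) :
    HasDerivAt (fun s => ∫ y in c..e s, P s y)
      ((∫ y in c..e x, partialX P x y) + e' * P x (e x)) x := by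
  have hPc : Continuous ↿P := hP.continuous
  have hPXc : Continuous ↿(partialX P) := continuous_partialX hP
  have toSpan_continuous : Continuous (ContinuousLinearMap.toSpanSingleton ℝ (M₁ := ℝ)) :=
    (ContinuousLinearMap.toSpanSingletonLIE ℝ ℝ).continuous
  have hpartial := hasStrictFDerivAt_uncurry_coprod (u := (x, e x))
    (f := fun s r => ∫ y in c..r, P s y)
    (f₁ := fun s r => ContinuousLinearMap.toSpanSingleton ℝ (∫ y in c..r, partialX P s y))
    (f₂ := fun s r => ContinuousLinearMap.toSpanSingleton ℝ (P s r))
    (.of_forall fun p => (hasDerivAt_integral_param (hasDerivAt_partialX hP)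
      (fun s => by fun_prop) hPXc p.1).hasFDerivAt)
    (.of_forall fun p => ((by fun_prop : Continuous (P p.1)).integral_hasStrictDerivAt
      c p.2).hasDerivAt.hasFDerivAt)
    (toSpan_continuous.comp (intervalIntegral.continuous_parametric_intervalIntegral_of_continuous
      (f := fun (p : ℝ × ℝ) y => partialX P p.1 y) (by fun_prop) continuous_snd)).continuousAt
    (toSpan_continuous.comp hPc).continuousAt
  have hchain := hpartial.hasFDerivAt.comp_hasDerivAt_of_eq x ((hasDerivAt_id x).prodMk he) rfl
  exact hchain.congr_deriv (by simp [Function.HasUncurry.uncurry])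

theorem hasDerivAt_integral_of_moving_graph {q : ℝ → ℝ → ℝ → ℝ} {η : ℝ → ℝ → ℝ}
    (hq : ContDiff ℝ 1 ↿q) (hη : ContDiff ℝ 1 ↿η) (t : ℝ) :
    HasDerivAt (fun s => ∫ x in a..b, ∫ y in c..η s x, q s x y)
      (∫ x in a..b, ((∫ y in c..η t x, phiT q t x y) + etaT η t x * q t x (η t x))) t := by
  have hqTc : Continuous ↿(phiT q) := continuous_phiT hq
  have hηc : Continuous ↿η := hη.continuous
  have hηTc : Continuous ↿(partialX η) := continuous_partialX hη
  refine hasDerivAt_integral_param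
    (F' := fun s x => (∫ y in c..η s x, phiT q s x y) + etaT η s x * q s x (η s x))
    (fun s x => hasDerivAt_integral_of_moving_endpoint (P := fun r y => q r x y)
      (by fun_prop) (hasDerivAt_partialX hη s x))
    (fun s => intervalIntegral.continuous_parametric_intervalIntegral_of_continuous
      (by fun_prop) (by fun_prop)) ?_ t
  exact (intervalIntegral.continuous_parametric_intervalIntegral_of_continuous
      (f := fun (p : ℝ × ℝ) y => phiT q p.1 p.2 y) (by fun_prop) hηc).add
    (hηTc.mul (by fun_prop))

theorem integral_under_graph_congr {f k : ℝ → ℝ → ℝ} {e : ℝ → ℝ} (hab : a ≤ b)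
    (hce : ∀ x ∈ Icc a b, c ≤ e x) (hfk : ∀ x ∈ Icc a b, ∀ y ∈ Icc c (e x), f x y = k x y) :
    ∫ x in a..b, ∫ y in c..e x, f x y = ∫ x in a..b, ∫ y in c..e x, k x y :=
  intervalIntegral_congr_Icc hab fun x hx => intervalIntegral_congr_Icc (hce x hx) (hfk x hx)

theorem integral_under_graph_mono {f k : ℝ → ℝ → ℝ} {e : ℝ → ℝ} (hf : Continuous ↿f)
    (hk : Continuous ↿k) (he : Continuous e) (hab : a ≤ b) (hce : ∀ x ∈ Icc a b, c ≤ e x)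
    (hfk : ∀ x ∈ Icc a b, ∀ y ∈ Icc c (e x), f x y ≤ k x y) :
    ∫ x in a..b, ∫ y in c..e x, f x y ≤ ∫ x in a..b, ∫ y in c..e x, k x y :=
  intervalIntegral_mono_Icc
    (intervalIntegral.continuous_parametric_intervalIntegral_of_continuous hf he)
    (intervalIntegral.continuous_parametric_intervalIntegral_of_continuous hk he) hab
    fun x hx => intervalIntegral_mono_Icc (by fun_prop) (by fun_prop) (hce x hx) (hfk x hx)

theorem eq_zero_of_integral_under_graph_eq_zero {f : ℝ → ℝ → ℝ} {e : ℝ → ℝ} (hf : Continuous ↿f)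
    (he : Continuous e) (hab : a < b) (hce : ∀ x ∈ Icc a b, c < e x)
    (hf_nonneg : ∀ x ∈ Icc a b, ∀ y ∈ Icc c (e x), 0 ≤ f x y)
    (hint : ∫ x in a..b, ∫ y in c..e x, f x y = 0) :
    ∀ x ∈ Icc a b, ∀ y ∈ Icc c (e x), f x y = 0 := fun x hx =>
  eq_zero_of_intervalIntegral_eq_zero (by fun_prop) (hce x hx) (hf_nonneg x hx)
    (eq_zero_of_intervalIntegral_eq_zero
      (intervalIntegral.continuous_parametric_intervalIntegral_of_continuous hf he) hab
      (fun z hz => intervalIntegral.integral_nonneg (hce z hz).le (hf_nonneg z hz)) hint x hx)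

theorem integral_divergence_under_graph {P Q : ℝ → ℝ → ℝ} {e : ℝ → ℝ} (hP : ContDiff ℝ 1 ↿P)
    (hQ : ContDiff ℝ 1 ↿Q) (he : ContDiff ℝ 1 e) :
    ∫ x in a..b, ∫ y in c..e x, (partialX P x y + partialY Q x y)
      = (∫ x in a..b, (Q x (e x) - deriv e x * P x (e x))) - (∫ x in a..b, Q x c)
        + (∫ y in c..e b, P b y) - ∫ y in c..e a, P a y := by
  have hPXc : Continuous ↿(partialX P) := continuous_partialX hP
  have hQYc : Continuous ↿(partialY Q) := continuous_partialY hQ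
  have flux_through_slices := intervalIntegral.integral_eq_sub_of_hasDerivAt (a := a) (b := b)
    (fun x _ => hasDerivAt_integral_of_moving_endpoint (c := c) hP
      (he.differentiable one_ne_zero x).hasDerivAt)
    ((by fun_prop : Continuous _).intervalIntegrable _ _)
  have slice : ∀ x, ∫ y in c..e x, (partialX P x y + partialY Q x y)
      = ((∫ y in c..e x, partialX P x y) + deriv e x * P x (e x))
        + ((Q x (e x) - deriv e x * P x (e x)) - Q x c) := fun x => by
    rw [intervalIntegral.integral_add ((by fun_prop : Continuous _).intervalIntegrable _ _)
      ((by fun_prop : Continuous _).intervalIntegrable _ _),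
      intervalIntegral.integral_eq_sub_of_hasDerivAt (fun y _ => hasDerivAt_partialY hQ x y)
      ((by fun_prop : Continuous _).intervalIntegrable _ _)]
    ring
  simp only [slice]
  rw [intervalIntegral.integral_add ((by fun_prop : Continuous _).intervalIntegrable _ _)
    ((by fun_prop : Continuous _).intervalIntegrable _ _), flux_through_slices,
    intervalIntegral.integral_sub ((by fun_prop : Continuous _).intervalIntegrable _ _)
    ((by fun_prop : Continuous _).intervalIntegrable _ _)]
  ring

theorem integral_under_graph_eq_of_divergence_eq {P Q D : ℝ → ℝ → ℝ} {e bottom left right : ℝ → ℝ}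
    (hP : ContDiff ℝ 1 ↿P) (hQ : ContDiff ℝ 1 ↿Q) (he : ContDiff ℝ 1 e) (hab : a ≤ b)
    (hce : ∀ x ∈ Icc a b, c ≤ e x)
    (hdiv : ∀ x ∈ Icc a b, ∀ y ∈ Icc c (e x), partialX P x y + partialY Q x y = D x y)
    (hbottom : ∀ x ∈ Icc a b, Q x c = bottom x) (hleft : ∀ y ∈ Icc c (e a), P a y = left y)
    (hright : ∀ y ∈ Icc c (e b), P b y = right y) :
    ∫ x in a..b, ∫ y in c..e x, D x y
      = (∫ x in a..b, (Q x (e x) - deriv e x * P x (e x))) - (∫ x in a..b, bottom x)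
        + (∫ y in c..e b, right y) - ∫ y in c..e a, left y := by
  rw [← integral_under_graph_congr hab hce hdiv, ← intervalIntegral_congr_Icc hab hbottom,
    ← intervalIntegral_congr_Icc (hce a (left_mem_Icc.2 hab)) hleft,
    ← intervalIntegral_congr_Icc (hce b (right_mem_Icc.2 hab)) hright]
  exact integral_divergence_under_graph hP hQ he

end MovingDomain

section PotentialFlow

/-- The entry `(φₓ² - φ_y²)/2` of the stress tensor of a velocity field `∇φ`; up to sign it is
also the entry in the second row and column. -/
def stressXX (φ : ℝ → ℝ → ℝ) (x y : ℝ) : ℝ := (partialX φ x y ^ 2 - partialY φ x y ^ 2) / 2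

/-- The off-diagonal entry `φₓφ_y` of the stress tensor of a velocity field `∇φ`. -/
def stressXY (φ : ℝ → ℝ → ℝ) (x y : ℝ) : ℝ := partialX φ x y * partialY φ x y

/-- The flux of the first row `(stressXX, stressXY)` of the stress tensor through the graph of
`e`, along the non-normalised upward normal `(-e', 1)`. -/
def horizontalFlux (e : ℝ → ℝ) (φ : ℝ → ℝ → ℝ) (x : ℝ) : ℝ :=
  stressXY φ x (e x) - deriv e x * stressXX φ x (e x)

/-- The flux of the second row `(stressXY, -stressXX)` of the stress tensor through the graph of
`e`, along the non-normalised upward normal `(-e', 1)`. -/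
def verticalFlux (e : ℝ → ℝ) (φ : ℝ → ℝ → ℝ) (x : ℝ) : ℝ :=
  -stressXX φ x (e x) - deriv e x * stressXY φ x (e x)

/-- The kinetic energy of the velocity field `∇φ` in the fluid between the bottom `y = -h` and
the surface `y = e x`. -/
def kineticEnergy (L h : ℝ) (e : ℝ → ℝ) (φ : ℝ → ℝ → ℝ) : ℝ :=
  1 / 2 * ∫ x in (0 : ℝ)..L, ∫ y in -h..e x, (partialX φ x y ^ 2 + partialY φ x y ^ 2)

/-- `φ` is the potential of an incompressible flow in the tank `0 ≤ x ≤ L`, `-h ≤ y ≤ e x`, with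
impermeable lateral walls and bottom. As in `IsWW2D`, both functions are globally defined. -/
structure IsPotentialFlow (L h : ℝ) (e : ℝ → ℝ) (φ : ℝ → ℝ → ℝ) : Prop where
  contDiff_surface : ContDiff ℝ 1 e
  contDiff_potential : ContDiff ℝ 2 ↿φ
  bottom_lt_surface : ∀ x ∈ Icc 0 L, -h < e x
  laplace : ∀ x ∈ Icc 0 L, ∀ y ∈ Icc (-h) (e x),
    partialX (partialX φ) x y + partialY (partialY φ) x y = 0
  left_wall : ∀ y ∈ Icc (-h) (e 0), partialX φ 0 y = 0
  right_wall : ∀ y ∈ Icc (-h) (e L), partialX φ L y = 0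
  bottom : ∀ x ∈ Icc 0 L, partialY φ x (-h) = 0

variable {φ : ℝ → ℝ → ℝ}

theorem contDiff_stressXX (hφ : ContDiff ℝ 2 ↿φ) : ContDiff ℝ 1 ↿(stressXX φ) :=
  (((contDiff_partialX hφ one_add_one_eq_two.le).pow 2).sub
    ((contDiff_partialY hφ one_add_one_eq_two.le).pow 2)).div_const 2

theorem contDiff_stressXY (hφ : ContDiff ℝ 2 ↿φ) : ContDiff ℝ 1 ↿(stressXY φ) :=
  (contDiff_partialX hφ one_add_one_eq_two.le).mul (contDiff_partialY hφ one_add_one_eq_two.le)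

theorem continuous_horizontalFlux {e : ℝ → ℝ} (he : ContDiff ℝ 1 e) (hφ : ContDiff ℝ 2 ↿φ) :
    Continuous (horizontalFlux e φ) := by
  have cXX := (contDiff_stressXX hφ).continuous
  have cXY := (contDiff_stressXY hφ).continuous
  unfold horizontalFlux
  fun_prop

theorem continuous_verticalFlux {e : ℝ → ℝ} (he : ContDiff ℝ 1 e) (hφ : ContDiff ℝ 2 ↿φ) :
    Continuous (verticalFlux e φ) := by
  have cXX := (contDiff_stressXX hφ).continuous
  have cXY := (contDiff_stressXY hφ).continuous
  unfold verticalFlux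
  fun_prop

-- With `u = φₓ`, `v = φ_y`, the next two identities are the Cauchy-Riemann equations for
-- `(u - i v)² / 2 = stressXX - i stressXY`.
theorem divergence_stress_fst (hφ : ContDiff ℝ 2 ↿φ) (x y : ℝ) :
    partialX (stressXX φ) x y + partialY (stressXY φ) x y
      = partialX φ x y * (partialX (partialX φ) x y + partialY (partialY φ) x y) := by
  have hu := contDiff_partialX hφ one_add_one_eq_two.le
  have hv := contDiff_partialY hφ one_add_one_eq_two.le
  have hXX : partialX (stressXX φ) x y = _ :=
    ((((hasDerivAt_partialX hu x y).pow 2).sub ((hasDerivAt_partialX hv x y).pow 2)).div_const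
      2).deriv
  have hXY : partialY (stressXY φ) x y = _ := partialY_mul hu hv x y
  rw [hXX, hXY, partialX_partialY_comm hφ]
  ring

theorem divergence_stress_snd (hφ : ContDiff ℝ 2 ↿φ) (x y : ℝ) :
    partialX (stressXY φ) x y - partialY (stressXX φ) x y
      = partialY φ x y * (partialX (partialX φ) x y + partialY (partialY φ) x y) := by
  have hu := contDiff_partialX hφ one_add_one_eq_two.le
  have hv := contDiff_partialY hφ one_add_one_eq_two.le
  have hXX : partialY (stressXX φ) x y = _ :=
    ((((hasDerivAt_partialY hu x y).pow 2).sub ((hasDerivAt_partialY hv x y).pow 2)).div_const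
      2).deriv
  have hXY : partialX (stressXY φ) x y = _ := partialX_mul hu hv x y
  rw [hXX, hXY, partialX_partialY_comm hφ]
  ring

theorem divergence_multiplier_stress (hφ : ContDiff ℝ 2 ↿φ) {X Y : ℝ → ℝ → ℝ}
    (hX : ContDiff ℝ 1 ↿X) (hY : ContDiff ℝ 1 ↿Y) (x y : ℝ) :
    partialX (fun x y => X x y * stressXX φ x y + Y x y * stressXY φ x y) x y
        + partialY (fun x y => X x y * stressXY φ x y - Y x y * stressXX φ x y) x y
      = (partialX X x y - partialY Y x y) * stressXX φ x y
        + (partialY X x y + partialX Y x y) * stressXY φ x y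
        + (X x y * partialX φ x y + Y x y * partialY φ x y)
          * (partialX (partialX φ) x y + partialY (partialY φ) x y) := by
  have hXX := contDiff_stressXX hφ
  have hXY := contDiff_stressXY hφ
  have fst : partialX (fun x y => X x y * stressXX φ x y + Y x y * stressXY φ x y) x y = _ :=
    (((hasDerivAt_partialX hX x y).mul (hasDerivAt_partialX hXX x y)).add
      ((hasDerivAt_partialX hY x y).mul (hasDerivAt_partialX hXY x y))).deriv
  have snd : partialY (fun x y => X x y * stressXY φ x y - Y x y * stressXX φ x y) x y = _ :=
    (((hasDerivAt_partialY hX x y).mul (hasDerivAt_partialY hXY x y)).sub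
      ((hasDerivAt_partialY hY x y).mul (hasDerivAt_partialY hXX x y))).deriv
  rw [fst, snd]
  linear_combination X x y * divergence_stress_fst hφ x y + Y x y * divergence_stress_snd hφ x y

namespace IsPotentialFlow

variable {L h : ℝ} {e : ℝ → ℝ}

theorem kineticEnergy_nonneg (hflow : IsPotentialFlow L h e φ) (hL : 0 ≤ L) :
    0 ≤ kineticEnergy L h e φ :=
  mul_nonneg one_half_pos.le (intervalIntegral.integral_nonneg hL fun x hx =>
    intervalIntegral.integral_nonneg (hflow.bottom_lt_surface x hx).le fun y _ => by positivity)

theorem velocity_eq_zero_of_kineticEnergy_eq_zero (hflow : IsPotentialFlow L h e φ) (hL : 0 < L)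
    (hK : kineticEnergy L h e φ = 0) :
    ∀ x ∈ Icc 0 L, ∀ y ∈ Icc (-h) (e x), partialX φ x y = 0 ∧ partialY φ x y = 0 := by
  have hu := continuous_partialX (hflow.contDiff_potential.of_le one_le_two)
  have hv := continuous_partialY (hflow.contDiff_potential.of_le one_le_two)
  have speed_zero := eq_zero_of_integral_under_graph_eq_zero ((hu.pow 2).add (hv.pow 2))
    hflow.contDiff_surface.continuous hL hflow.bottom_lt_surface
    (fun x _ y _ => by positivity) ((mul_eq_zero_iff_left one_half_pos.ne').1 hK)
  intro x hx y hy
  have hxy := speed_zero x hx y hy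
  constructor <;> nlinarith [sq_nonneg (partialX φ x y), sq_nonneg (partialY φ x y)]

theorem integral_grad_dot_velocity (hflow : IsPotentialFlow L h e φ) (hL : 0 ≤ L)
    {w : ℝ → ℝ → ℝ} (hw : ContDiff ℝ 1 ↿w) :
    ∫ x in (0 : ℝ)..L, ∫ y in -h..e x,
        (partialX w x y * partialX φ x y + partialY w x y * partialY φ x y)
      = ∫ x in (0 : ℝ)..L,
        w x (e x) * (partialY φ x (e x) - deriv e x * partialX φ x (e x)) := by
  have hu := contDiff_partialX hflow.contDiff_potential one_add_one_eq_two.le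
  have hv := contDiff_partialY hflow.contDiff_potential one_add_one_eq_two.le
  rw [integral_under_graph_eq_of_divergence_eq (hw.mul hu) (hw.mul hv) hflow.contDiff_surface hL
    (P := fun x y => w x y * partialX φ x y) (Q := fun x y => w x y * partialY φ x y)
    (bottom := 0) (left := 0) (right := 0) (fun x hx => (hflow.bottom_lt_surface x hx).le)
    (fun x hx y hy => by
      rw [partialX_mul hw hu, partialY_mul hw hv]
      linear_combination w x y * hflow.laplace x hx y hy)
    (fun x hx => by simp [hflow.bottom x hx]) (fun y hy => by simp [hflow.left_wall y hy])
    (fun y hy => by simp [hflow.right_wall y hy])]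
  simp only [Pi.zero_apply, intervalIntegral.integral_zero, add_zero, sub_zero]
  congr! 2 with x
  ring

theorem rellich_identity (hflow : IsPotentialFlow L h e φ) (hL : 0 ≤ L) {X Y : ℝ → ℝ → ℝ}
    (hX : ContDiff ℝ 1 ↿X) (hY : ContDiff ℝ 1 ↿Y) :
    ∫ x in (0 : ℝ)..L, (X x (e x) * horizontalFlux e φ x + Y x (e x) * verticalFlux e φ x)
      = (∫ x in (0 : ℝ)..L, ∫ y in -h..e x,
          ((partialX X x y - partialY Y x y) * stressXX φ x y
            + (partialY X x y + partialX Y x y) * stressXY φ x y))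
        - (∫ x in (0 : ℝ)..L, Y x (-h) * partialX φ x (-h) ^ 2 / 2)
        + (∫ y in -h..e L, X L y * partialY φ L y ^ 2 / 2)
        - ∫ y in -h..e 0, X 0 y * partialY φ 0 y ^ 2 / 2 := by
  have hXX := contDiff_stressXX hflow.contDiff_potential
  have hXY := contDiff_stressXY hflow.contDiff_potential
  have surface : ∀ x, X x (e x) * horizontalFlux e φ x + Y x (e x) * verticalFlux e φ x
      = X x (e x) * stressXY φ x (e x) - Y x (e x) * stressXX φ x (e x)
        - deriv e x * (X x (e x) * stressXX φ x (e x) + Y x (e x) * stressXY φ x (e x)) := by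
    intro x
    unfold horizontalFlux verticalFlux
    ring
  rw [integral_under_graph_eq_of_divergence_eq
    ((hX.mul hXX).add (hY.mul hXY)) ((hX.mul hXY).sub (hY.mul hXX)) hflow.contDiff_surface hL
    (P := fun x y => X x y * stressXX φ x y + Y x y * stressXY φ x y)
    (Q := fun x y => X x y * stressXY φ x y - Y x y * stressXX φ x y)
    (bottom := fun x => -(Y x (-h) * partialX φ x (-h) ^ 2 / 2))
    (left := fun y => -(X 0 y * partialY φ 0 y ^ 2 / 2))
    (right := fun y => -(X L y * partialY φ L y ^ 2 / 2))
    (fun x hx => (hflow.bottom_lt_surface x hx).le)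
    (fun x hx y hy => by
      rw [divergence_multiplier_stress hflow.contDiff_potential hX hY, hflow.laplace x hx y hy,
        mul_zero, add_zero])
    (fun x hx => by rw [stressXX, stressXY, hflow.bottom x hx]; ring)
    (fun y hy => by rw [stressXX, stressXY, hflow.left_wall y hy]; ring)
    (fun y hy => by rw [stressXX, stressXY, hflow.right_wall y hy]; ring)]
  simp only [surface, intervalIntegral.integral_neg]
  ring

theorem neg_mul_kineticEnergy_le_integral_stressXY (hflow : IsPotentialFlow L h e φ) (hL : 0 ≤ L)
    {σ : ℝ → ℝ} {C : ℝ} (hσ : Continuous σ) (hσC : ∀ x ∈ Icc 0 L, |σ x| ≤ C) :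
    -(C * kineticEnergy L h e φ) ≤ ∫ x in (0 : ℝ)..L, ∫ y in -h..e x, σ x * stressXY φ x y := by
  have hu := continuous_partialX (hflow.contDiff_potential.of_le one_le_two)
  have hv := continuous_partialY (hflow.contDiff_potential.of_le one_le_two)
  have pointwise : ∀ x ∈ Icc 0 L, ∀ y,
      -(C / 2) * (partialX φ x y ^ 2 + partialY φ x y ^ 2) ≤ σ x * stressXY φ x y := by
    intro x hx y
    obtain ⟨hlo, hhi⟩ := abs_le.1 (hσC x hx)
    rw [stressXY]
    nlinarith [mul_nonneg (sub_nonneg.2 hhi) (sq_nonneg (partialX φ x y - partialY φ x y)),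
      mul_nonneg (neg_le_iff_add_nonneg'.1 hlo) (sq_nonneg (partialX φ x y + partialY φ x y))]
  calc -(C * kineticEnergy L h e φ)
      = ∫ x in (0 : ℝ)..L, ∫ y in -h..e x,
          -(C / 2) * (partialX φ x y ^ 2 + partialY φ x y ^ 2) := by
        simp only [kineticEnergy, intervalIntegral.integral_const_mul]
        ring
    _ ≤ ∫ x in (0 : ℝ)..L, ∫ y in -h..e x, σ x * stressXY φ x y :=
        integral_under_graph_mono (by fun_prop) ((hσ.comp continuous_fst).mul (hu.mul hv))
          hflow.contDiff_surface.continuous hL (fun x hx => (hflow.bottom_lt_surface x hx).le)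
          fun x hx y _ => pointwise x hx y

-- The multiplier is `(x, y - κ e(x))`: the part `(x, y)` has no bulk term, as the stress tensor is
-- trace-free, and the slope of the second component is what `B` controls.
theorem le_integral_virial_flux (hflow : IsPotentialFlow L h e φ) (hL : 0 ≤ L) {κ B : ℝ}
    (hκ : 0 ≤ κ) (hdepth : ∀ x ∈ Icc 0 L, 0 ≤ h + κ * e x)
    (hslope : ∀ x ∈ Icc 0 L, |deriv e x| ≤ B) :
    -(κ * B * kineticEnergy L h e φ)
      ≤ ∫ x in (0 : ℝ)..L, (x * horizontalFlux e φ x + (1 - κ) * e x * verticalFlux e φ x) := by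
  have he' : Continuous (deriv e) := hflow.contDiff_surface.continuous_deriv le_rfl
  have rellich := hflow.rellich_identity hL (X := fun x _ => x) (Y := fun x y => y - κ * e x)
    contDiff_fst (contDiff_snd.sub (contDiff_const.mul (hflow.contDiff_surface.comp contDiff_fst)))
  have interior := hflow.neg_mul_kineticEnergy_le_integral_stressXY hL
    (σ := fun x => -(κ * deriv e x)) (C := κ * B) (by fun_prop) fun x hx => by
      rw [abs_neg, abs_mul, abs_of_nonneg hκ]
      exact mul_le_mul_of_nonneg_left (hslope x hx) hκ
  have bottom : 0 ≤ -∫ x in (0 : ℝ)..L, (-h - κ * e x) * partialX φ x (-h) ^ 2 / 2 := by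
    rw [← intervalIntegral.integral_neg]
    exact intervalIntegral.integral_nonneg hL fun x hx => by
      nlinarith [mul_nonneg (hdepth x hx) (sq_nonneg (partialX φ x (-h)))]
  have right : 0 ≤ ∫ y in -h..e L, L * partialY φ L y ^ 2 / 2 :=
    intervalIntegral.integral_nonneg (hflow.bottom_lt_surface L (right_mem_Icc.2 hL)).le
      fun y _ => by positivity
  have hXx : ∀ x y, partialX (fun s _ => s) x y = 1 := fun x _ => deriv_id x
  have hXy : ∀ x y, partialY (fun s _ => s) x y = 0 := fun x y => deriv_const y x
  have hYx : ∀ x y, partialX (fun s r => r - κ * e s) x y = -(κ * deriv e x) := by simp [partialX]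
  have hYy : ∀ x y, partialY (fun s r => r - κ * e s) x y = 1 := by simp [partialY]
  have surface : ∀ x, (1 - κ) * e x = e x - κ * e x := fun x => by ring
  simp only [hXx, hXy, hYx, hYy, sub_self, zero_mul, zero_add, zero_div,
    intervalIntegral.integral_zero] at rellich
  simp only [surface]
  linarith

end IsPotentialFlow

end PotentialFlow

section SurfaceTraces

variable {n : WithTop ℕ∞} {η : ℝ → ℝ → ℝ} {ϕ : ℝ → ℝ → ℝ → ℝ}

theorem contDiff_psi (hη : ContDiff ℝ n ↿η) (hϕ : ContDiff ℝ n ↿ϕ) : ContDiff ℝ n ↿(psi η ϕ) :=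
  hϕ.comp (contDiff_fst.prodMk (contDiff_snd.prodMk hη))

theorem psiX_eq (hη : ContDiff ℝ 1 ↿η) (hϕ : ContDiff ℝ 1 ↿ϕ) (t x : ℝ) :
    psiX η ϕ t x = phiX ϕ t x (η t x) + etaX η t x * phiY ϕ t x (η t x) :=
  (hasDerivAt_along_graph (contDiff_time_slice hϕ t) (hasDerivAt_partialY hη t x)).deriv

theorem psiT_eq (hη : ContDiff ℝ 1 ↿η) (hϕ : ContDiff ℝ 1 ↿ϕ) (t x : ℝ) :
    psiT η ϕ t x = phiT ϕ t x (η t x) + etaT η t x * phiY ϕ t x (η t x) :=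
  (hasDerivAt_along_graph (f := fun s z => ϕ s x z) (by fun_prop)
    (hasDerivAt_partialX hη t x)).deriv

end SurfaceTraces

section Virial

variable {η ψ : ℝ → ℝ → ℝ}

/-- The virial functional `∫ (x η ∂ₓψ + c η ψ) dx` of the surface elevation `η` and the trace `ψ` of
the potential: the momentum density `η ∂ₓψ` paired with the dilation generator `x`, corrected by a
multiple of `η ψ` that redistributes its growth between kinetic and potential energy. -/
def virial (c L : ℝ) (η ψ : ℝ → ℝ → ℝ) (t : ℝ) : ℝ :=
  ∫ x in (0 : ℝ)..L, (x * η t x * partialY ψ t x + c * (η t x * ψ t x))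

theorem abs_virial_le {c L t : ℝ} (hη : Continuous (η t)) (hψ : ContDiff ℝ 1 (ψ t)) (hL : 0 ≤ L)
    (hmean : ∫ x in (0 : ℝ)..L, η t x = 0) :
    |virial c L η ψ t| ≤ (1 + |c|) * L * √(∫ x in (0 : ℝ)..L, η t x ^ 2)
      * √(∫ x in (0 : ℝ)..L, partialY ψ t x ^ 2) := by
  have hψ' : Continuous (partialY ψ t) := hψ.continuous_deriv le_rfl
  have momentum : |∫ x in (0 : ℝ)..L, x * η t x * partialY ψ t x|
      ≤ L * (√(∫ x in (0 : ℝ)..L, η t x ^ 2) * √(∫ x in (0 : ℝ)..L, partialY ψ t x ^ 2)) := by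
    calc |∫ x in (0 : ℝ)..L, x * η t x * partialY ψ t x|
        ≤ ∫ x in (0 : ℝ)..L, L * (|η t x| * |partialY ψ t x|) := by
          refine (intervalIntegral.abs_integral_le_integral_abs hL).trans
            (intervalIntegral_mono_Icc (by fun_prop) (by fun_prop) hL fun x hx => ?_)
          rw [mul_assoc, abs_mul, abs_mul, abs_of_nonneg hx.1]
          exact mul_le_mul_of_nonneg_right hx.2 (by positivity)
      _ ≤ _ := by
          rw [intervalIntegral.integral_const_mul]
          exact mul_le_mul_of_nonneg_left (integral_abs_mul_abs_le_sqrt_mul_sqrt hη hψ' hL) hL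
  have correction : |c * ∫ x in (0 : ℝ)..L, η t x * ψ t x|
      ≤ |c| * (L * √(∫ x in (0 : ℝ)..L, η t x ^ 2) * √(∫ x in (0 : ℝ)..L, partialY ψ t x ^ 2)) := by
    rw [abs_mul]
    refine mul_le_mul_of_nonneg_left ?_ (abs_nonneg c)
    exact (abs_integral_mul_le_of_integral_eq_zero hη hψ hL hmean).trans_eq (by rw [sub_zero]; rfl)
  rw [virial, intervalIntegral.integral_add ((by fun_prop : Continuous _).intervalIntegrable _ _)
    ((by fun_prop : Continuous _).intervalIntegrable _ _), intervalIntegral.integral_const_mul]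
  linarith [abs_add_le (∫ x in (0 : ℝ)..L, x * η t x * partialY ψ t x)
    (c * ∫ x in (0 : ℝ)..L, η t x * ψ t x)]

theorem hasDerivAt_virial (hη : ContDiff ℝ 1 ↿η) (hψ : ContDiff ℝ 2 ↿ψ) (c L t : ℝ)
    (hcontact : η t L = 0) :
    HasDerivAt (virial c L η ψ)
      (∫ x in (0 : ℝ)..L,
        (x * (partialX η t x * partialY ψ t x - partialY η t x * partialX ψ t x)
          + (c - 1) * (η t x * partialX ψ t x) + c * (partialX η t x * ψ t x))) t := by
  have hψ1 : ContDiff ℝ 1 ↿ψ := hψ.of_le one_le_two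
  have hψX := contDiff_partialX hψ one_add_one_eq_two.le
  have hψY := contDiff_partialY hψ one_add_one_eq_two.le
  have cηX := continuous_partialX hη
  have cηY := continuous_partialY hη
  have cψXY := continuous_partialX hψY
  have deriv_under_integral := hasDerivAt_integral_param (a := 0) (b := L)
    (F := fun s x => x * η s x * partialY ψ s x + c * (η s x * ψ s x))
    (F' := fun s x => (x * partialX η s x * partialY ψ s x + x * η s x * partialX (partialY ψ) s x)
      + c * (partialX η s x * ψ s x + η s x * partialX ψ s x))
    (fun s x => (((hasDerivAt_partialX hη s x).const_mul x).mul (hasDerivAt_partialX hψY s x)).add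
      (((hasDerivAt_partialX hη s x).mul (hasDerivAt_partialX hψ1 s x)).const_mul c))
    (fun s => by fun_prop) (by fun_prop) t
  have by_parts : ∫ x in (0 : ℝ)..L, ((η t x + x * partialY η t x) * partialX ψ t x
      + x * η t x * partialX (partialY ψ) t x) = 0 := by
    rw [intervalIntegral.integral_eq_sub_of_hasDerivAt (f := fun x => x * η t x * partialX ψ t x)
      (fun x _ => ?_) ((by fun_prop : Continuous _).intervalIntegrable _ _), hcontact]
    · ring
    · rw [partialX_partialY_comm hψ]
      exact (((hasDerivAt_id' x).mul (hasDerivAt_partialY hη t x)).mul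
        (hasDerivAt_partialY hψX t x)).congr_deriv (by simp only [Pi.mul_apply]; ring)
  refine deriv_under_integral.congr_deriv ?_
  rw [← sub_eq_zero,
    ← intervalIntegral.integral_sub ((by fun_prop : Continuous _).intervalIntegrable _ _)
      ((by fun_prop : Continuous _).intervalIntegrable _ _), ← by_parts]
  congr! 2 with x
  ring

end Virial

section WaterWaves

/-- A solution on `[0,T]` of the water-wave system of the tank `[0,L]` of depth `h`, as in `IsWW2D`
but of class `C²` and without conditions on the contact angle or on the depth below the surface,
which only has to stay above the bottom. -/
structure IsWaterWave (L h g T : ℝ) (η : ℝ → ℝ → ℝ) (ϕ : ℝ → ℝ → ℝ → ℝ) : Prop where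
  contDiff_surface : ContDiff ℝ 2 ↿η
  contDiff_potential : ContDiff ℝ 2 ↿ϕ
  isPotentialFlow : ∀ t ∈ Icc 0 T, IsPotentialFlow L h (η t) (ϕ t)
  mean_surface : ∀ t ∈ Icc 0 T, ∫ x in (0 : ℝ)..L, η t x = 0
  kinematic : ∀ t ∈ Icc 0 T, ∀ x ∈ Icc 0 L,
    etaT η t x = phiY ϕ t x (η t x) - etaX η t x * phiX ϕ t x (η t x)
  bernoulli : ∀ t ∈ Icc 0 T, ∀ x ∈ Icc 0 L,
    phiT ϕ t x (η t x) + 1 / 2 * (phiX ϕ t x (η t x) ^ 2 + phiY ϕ t x (η t x) ^ 2) + g * η t x = 0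

variable {L h g T : ℝ} {η : ℝ → ℝ → ℝ} {ϕ : ℝ → ℝ → ℝ → ℝ}

theorem IsWW2D.isWaterWave (hsol : IsWW2D L h g T η ϕ) (hh : 0 < h) :
    IsWaterWave L h g T η ϕ :=
  have hη : ContDiff ℝ 2 ↿η := contDiff_infty.1 hsol.smooth_eta 2
  have hϕ : ContDiff ℝ 2 ↿ϕ := contDiff_infty.1 hsol.smooth_phi 2
  { contDiff_surface := hη
    contDiff_potential := hϕ
    isPotentialFlow := fun t ht =>
      { contDiff_surface := (hη.of_le one_le_two).comp (contDiff_prodMk_right t)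
        contDiff_potential := contDiff_time_slice hϕ t
        bottom_lt_surface := fun x hx => by linarith [hsol.eta_lower t ht x hx]
        laplace := hsol.laplace t ht
        left_wall := hsol.bc_left t ht
        right_wall := hsol.bc_right t ht
        bottom := hsol.bc_bottom t ht }
    mean_surface := hsol.eta_mean
    kinematic := hsol.kinematic
    bernoulli := hsol.bernoulli }

theorem potentialEnergy_nonneg (hL : 0 ≤ L) (hg : 0 ≤ g) {e : ℝ → ℝ} :
    0 ≤ g / 2 * ∫ x in (0 : ℝ)..L, e x ^ 2 :=
  mul_nonneg (by positivity) (intervalIntegral.integral_nonneg hL fun x _ => sq_nonneg (e x))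

namespace IsWaterWave

variable {t : ℝ}

theorem psiT_eq_verticalFlux (hsol : IsWaterWave L h g T η ϕ) (ht : t ∈ Icc 0 T) {x : ℝ}
    (hx : x ∈ Icc 0 L) :
    psiT η ϕ t x = verticalFlux (η t) (ϕ t) x - g * η t x := by
  rw [psiT_eq (hsol.contDiff_surface.of_le one_le_two) (hsol.contDiff_potential.of_le one_le_two)]
  change _ = -((phiX ϕ t x (η t x) ^ 2 - phiY ϕ t x (η t x) ^ 2) / 2)
    - etaX η t x * (phiX ϕ t x (η t x) * phiY ϕ t x (η t x)) - g * η t x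
  linear_combination hsol.bernoulli t ht x hx + phiY ϕ t x (η t x) * hsol.kinematic t ht x hx

theorem etaT_mul_psiX_sub_etaX_mul_psiT (hsol : IsWaterWave L h g T η ϕ) (ht : t ∈ Icc 0 T) {x : ℝ}
    (hx : x ∈ Icc 0 L) :
    etaT η t x * psiX η ϕ t x - etaX η t x * psiT η ϕ t x
      = horizontalFlux (η t) (ϕ t) x + g * (η t x * etaX η t x) := by
  rw [hsol.psiT_eq_verticalFlux ht hx, hsol.kinematic t ht x hx,
    psiX_eq (hsol.contDiff_surface.of_le one_le_two) (hsol.contDiff_potential.of_le one_le_two)]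
  change _ - etaX η t x * (-((phiX ϕ t x (η t x) ^ 2 - phiY ϕ t x (η t x) ^ 2) / 2)
      - etaX η t x * (phiX ϕ t x (η t x) * phiY ϕ t x (η t x)) - g * η t x)
    = phiX ϕ t x (η t x) * phiY ϕ t x (η t x)
      - etaX η t x * ((phiX ϕ t x (η t x) ^ 2 - phiY ϕ t x (η t x) ^ 2) / 2) + _
  ring

theorem integral_etaT_mul_psi (hsol : IsWaterWave L h g T η ϕ) (hL : 0 ≤ L) (ht : t ∈ Icc 0 T) :
    ∫ x in (0 : ℝ)..L, etaT η t x * psi η ϕ t x = 2 * kineticEnergy L h (η t) (ϕ t) := by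
  have green := (hsol.isPotentialFlow t ht).integral_grad_dot_velocity hL (w := ϕ t)
    (contDiff_time_slice (hsol.contDiff_potential.of_le one_le_two) t)
  calc ∫ x in (0 : ℝ)..L, etaT η t x * psi η ϕ t x
      = ∫ x in (0 : ℝ)..L, ∫ y in -h..η t x, (partialX (ϕ t) x y * partialX (ϕ t) x y
          + partialY (ϕ t) x y * partialY (ϕ t) x y) := by
        rw [green]
        exact intervalIntegral_congr_Icc hL fun x hx => by
          rw [hsol.kinematic t ht x hx, mul_comm]
          rfl
    _ = 2 * kineticEnergy L h (η t) (ϕ t) := by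
        simp only [kineticEnergy, sq]
        ring

theorem integral_phiT_speed_sq (hsol : IsWaterWave L h g T η ϕ) (hL : 0 ≤ L) (ht : t ∈ Icc 0 T) :
    ∫ x in (0 : ℝ)..L, ∫ y in -h..η t x,
        phiT (fun s x y => phiX ϕ s x y ^ 2 + phiY ϕ s x y ^ 2) t x y
      = 2 * ∫ x in (0 : ℝ)..L, phiT ϕ t x (η t x) * etaT η t x := by
  have hϕ := hsol.contDiff_potential
  have hu := contDiff_phiX hϕ one_add_one_eq_two.le
  have hv := contDiff_phiY hϕ one_add_one_eq_two.le
  have acceleration : ∀ x y, phiT (fun s x y => phiX ϕ s x y ^ 2 + phiY ϕ s x y ^ 2) t x y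
      = 2 * (phiX (phiT ϕ) t x y * phiX ϕ t x y + phiY (phiT ϕ) t x y * phiY ϕ t x y) := by
    intro x y
    rw [← phiT_phiX_comm hϕ, ← phiT_phiY_comm hϕ]
    refine (((hasDerivAt_phiT hu t x y).pow 2).add
      ((hasDerivAt_phiT hv t x y).pow 2)).deriv.trans ?_
    ring
  simp only [acceleration, intervalIntegral.integral_const_mul]
  refine congrArg (2 * ·) (((hsol.isPotentialFlow t ht).integral_grad_dot_velocity hL
    (contDiff_time_slice (contDiff_phiT hϕ one_add_one_eq_two.le) t)).trans
    (intervalIntegral_congr_Icc hL fun x hx => ?_))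
  rw [hsol.kinematic t ht x hx]
  rfl

theorem hasDerivAt_kineticEnergy (hsol : IsWaterWave L h g T η ϕ) (hL : 0 ≤ L)
    (ht : t ∈ Icc 0 T) :
    HasDerivAt (fun s => kineticEnergy L h (η s) (ϕ s))
      (-(g * ∫ x in (0 : ℝ)..L, η t x * etaT η t x)) t := by
  have hη : ContDiff ℝ 1 ↿η := hsol.contDiff_surface.of_le one_le_two
  have hu := contDiff_phiX hsol.contDiff_potential one_add_one_eq_two.le
  have hv := contDiff_phiY hsol.contDiff_potential one_add_one_eq_two.le
  have hq : ContDiff ℝ 1 ↿fun s x y => phiX ϕ s x y ^ 2 + phiY ϕ s x y ^ 2 :=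
    (hu.pow 2).add (hv.pow 2)
  have cηT : Continuous ↿(etaT η) := continuous_partialX hη
  have cqT := continuous_phiT hq
  have cw := continuous_phiT (hsol.contDiff_potential.of_le one_le_two)
  refine ((hasDerivAt_integral_of_moving_graph hq hη t).const_mul (1 / 2)).congr_deriv ?_
  rw [intervalIntegral.integral_add ((by fun_prop : Continuous _).intervalIntegrable _ _)
    ((by fun_prop : Continuous _).intervalIntegrable _ _), hsol.integral_phiT_speed_sq hL ht,
    ← intervalIntegral.integral_const_mul,
    ← intervalIntegral.integral_add ((by fun_prop : Continuous _).intervalIntegrable _ _)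
      ((by fun_prop : Continuous _).intervalIntegrable _ _), ← intervalIntegral.integral_const_mul,
    ← intervalIntegral.integral_const_mul, ← intervalIntegral.integral_neg]
  refine intervalIntegral_congr_Icc hL fun x hx => ?_
  linear_combination etaT η t x * hsol.bernoulli t ht x hx

theorem hasDerivAt_integral_sq_surface (hη : ContDiff ℝ 1 ↿η) (L t : ℝ) :
    HasDerivAt (fun s => ∫ x in (0 : ℝ)..L, η s x ^ 2)
      (2 * ∫ x in (0 : ℝ)..L, η t x * etaT η t x) t := by
  have hηT : Continuous ↿(etaT η) := continuous_partialX hη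
  rw [← intervalIntegral.integral_const_mul]
  exact hasDerivAt_integral_param (F := fun s x => η s x ^ 2)
    (F' := fun s x => 2 * (η s x * etaT η s x))
    (fun s x => ((hasDerivAt_partialX hη s x).pow 2).congr_deriv (by
      change _ = 2 * (η s x * partialX η s x); ring))
    (fun s => by fun_prop) (by fun_prop) t

theorem energy2D_eq (hsol : IsWaterWave L h g T η ϕ) (hL : 0 ≤ L) (ht : t ∈ Icc 0 T) :
    energy2D L h g η ϕ t = energy2D L h g η ϕ 0 := by
  have stationary : ∀ s ∈ Icc 0 T, HasDerivAt (energy2D L h g η ϕ) 0 s := fun s hs =>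
    (((hasDerivAt_integral_sq_surface (hsol.contDiff_surface.of_le one_le_two) L s).const_mul
      (g / 2)).add (hsol.hasDerivAt_kineticEnergy hL hs)).congr_deriv (by ring)
  exact constant_of_has_deriv_right_zero
    (fun s hs => (stationary s hs).continuousAt.continuousWithinAt)
    (fun s hs => (stationary s (Ico_subset_Icc_self hs)).hasDerivWithinAt) t ht

theorem potentialEnergy_le_energy2D (hsol : IsWaterWave L h g T η ϕ) (hL : 0 ≤ L)
    (ht : t ∈ Icc 0 T) :
    g / 2 * ∫ x in (0 : ℝ)..L, η t x ^ 2 ≤ energy2D L h g η ϕ 0 :=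
  hsol.energy2D_eq hL ht ▸
    le_add_of_nonneg_right ((hsol.isPotentialFlow t ht).kineticEnergy_nonneg hL)

theorem energy2D_nonneg (hsol : IsWaterWave L h g T η ϕ) (hL : 0 ≤ L) (hg : 0 ≤ g)
    (ht : t ∈ Icc 0 T) : 0 ≤ energy2D L h g η ϕ 0 :=
  (potentialEnergy_nonneg hL hg).trans (hsol.potentialEnergy_le_energy2D hL ht)

theorem rest_of_energy2D_eq_zero (hsol : IsWaterWave L h g T η ϕ) (hL : 0 < L) (hg : 0 < g)
    (hE : energy2D L h g η ϕ 0 = 0) :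
    ∀ t ∈ Icc 0 T, ∀ x ∈ Icc 0 L,
      η t x = 0 ∧ ∀ y ∈ Icc (-h) (η t x), phiX ϕ t x y = 0 ∧ phiY ϕ t x y = 0 := by
  intro t ht
  have cη := hsol.contDiff_surface.continuous
  have hflow := hsol.isPotentialFlow t ht
  obtain ⟨potential_zero, kinetic_zero⟩ := (add_eq_zero_iff_of_nonneg
    (potentialEnergy_nonneg hL.le hg.le) (hflow.kineticEnergy_nonneg hL.le)).1
    ((hsol.energy2D_eq hL.le ht).trans hE)
  have surface_zero := eq_zero_of_intervalIntegral_eq_zero (by fun_prop) hL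
    (fun x _ => sq_nonneg (η t x)) ((mul_eq_zero_iff_left (half_pos hg).ne').1 potential_zero)
  exact fun x hx => ⟨pow_eq_zero_iff two_ne_zero |>.1 (surface_zero x hx),
    hflow.velocity_eq_zero_of_kineticEnergy_eq_zero hL kinetic_zero x hx⟩

theorem hasDerivAt_virial_psi (hsol : IsWaterWave L h g T η ϕ) (hL : 0 ≤ L) (ht : t ∈ Icc 0 T)
    (hcontact : η t L = 0) (c : ℝ) :
    HasDerivAt (virial c L η (psi η ϕ))
      ((∫ x in (0 : ℝ)..L,
          (x * horizontalFlux (η t) (ϕ t) x + (c - 1) * η t x * verticalFlux (η t) (ϕ t) x))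
        + (1 - 2 * c) * (g / 2 * ∫ x in (0 : ℝ)..L, η t x ^ 2)
        + 2 * c * kineticEnergy L h (η t) (ϕ t)) t := by
  have hη : ContDiff ℝ 1 ↿η := hsol.contDiff_surface.of_le one_le_two
  have hψ := contDiff_psi hsol.contDiff_surface hsol.contDiff_potential
  have hflow := hsol.isPotentialFlow t ht
  have cηT : Continuous ↿(etaT η) := continuous_partialX hη
  have cηX : Continuous ↿(etaX η) := continuous_partialY hη
  have cH := continuous_horizontalFlux hflow.contDiff_surface hflow.contDiff_potential
  have cV := continuous_verticalFlux hflow.contDiff_surface hflow.contDiff_potential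
  have momentum_balance : HasDerivAt (virial c L η (psi η ϕ)) (∫ x in (0 : ℝ)..L,
      (x * (etaT η t x * psiX η ϕ t x - etaX η t x * psiT η ϕ t x)
        + (c - 1) * (η t x * psiT η ϕ t x) + c * (etaT η t x * psi η ϕ t x))) t :=
    hasDerivAt_virial hη hψ c L t hcontact
  have gravity_work : ∫ x in (0 : ℝ)..L, x * (η t x * etaX η t x)
      = -(1 / 2 * ∫ x in (0 : ℝ)..L, η t x ^ 2) :=
    integral_id_mul_mul_deriv hflow.contDiff_surface hcontact
  refine momentum_balance.congr_deriv ?_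
  calc _ = ∫ x in (0 : ℝ)..L,
        (g * (x * (η t x * etaX η t x)) + ((1 - c) * g * η t x ^ 2
          + (c * (etaT η t x * psi η ϕ t x) + (x * horizontalFlux (η t) (ϕ t) x
            + (c - 1) * η t x * verticalFlux (η t) (ϕ t) x)))) :=
        intervalIntegral_congr_Icc hL fun x hx => by
          linear_combination x * hsol.etaT_mul_psiX_sub_etaX_mul_psiT ht hx
            + (c - 1) * η t x * hsol.psiT_eq_verticalFlux ht hx
    _ = _ := by
        rw [intervalIntegral.integral_add, intervalIntegral.integral_add,
          intervalIntegral.integral_add, intervalIntegral.integral_const_mul,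
          intervalIntegral.integral_const_mul, intervalIntegral.integral_const_mul,
          gravity_work, hsol.integral_etaT_mul_psi hL ht]
        · ring
        all_goals exact (by fun_prop : Continuous _).intervalIntegrable _ _

-- `c = 1/4` makes the growth rates `1 - 2c` and `2c` of potential and kinetic energy equal, and
-- turns the multiplier `(x, y - κ η)` into the one with `κ = 2 - c = 7/4`.
theorem mul_energy2D_le_deriv_virial (hsol : IsWaterWave L h g T η ϕ) (hL : 0 ≤ L)
    (ht : t ∈ Icc 0 T) (hcontact : η t L = 0) (hdepth : ∀ x ∈ Icc 0 L, 0 ≤ h + 7 / 4 * η t x)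
    (hg : 0 ≤ g) {B : ℝ} (hslope : ∀ x ∈ Icc 0 L, |etaX η t x| ≤ B) :
    (2 - 7 * B) / 4 * energy2D L h g η ϕ 0 ≤ deriv (virial (1 / 4) L η (psi η ϕ)) t := by
  have hflow := hsol.isPotentialFlow t ht
  have flux := hflow.le_integral_virial_flux hL (κ := 7 / 4) (by norm_num) hdepth hslope
  have hB : 0 ≤ B := (abs_nonneg _).trans (hslope 0 (left_mem_Icc.2 hL))
  have hE : energy2D L h g η ϕ 0
      = g / 2 * (∫ x in (0 : ℝ)..L, η t x ^ 2) + kineticEnergy L h (η t) (ϕ t) :=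
    (hsol.energy2D_eq hL ht).symm
  rw [(hsol.hasDerivAt_virial_psi hL ht hcontact (1 / 4)).deriv, hE]
  norm_num at flux ⊢
  nlinarith [mul_nonneg hB (potentialEnergy_nonneg hL hg (e := η t))]

theorem abs_virial_psi_le (hsol : IsWaterWave L h g T η ϕ) (hL : 0 ≤ L) (hg : 0 < g)
    (ht : t ∈ Icc 0 T) {A : ℝ}
    (hpsiX : √(∫ x in (0 : ℝ)..L, psiX η ϕ t x ^ 2) ≤ A * √(2 * energy2D L h g η ϕ 0)) :
    |virial (1 / 4) L η (psi η ϕ) t| ≤ 5 * L * A / √g * energy2D L h g η ϕ 0 / 2 := by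
  set E := energy2D L h g η ϕ 0
  have amplitude : √(∫ x in (0 : ℝ)..L, η t x ^ 2) ≤ √(2 * E) / √g := by
    rw [← Real.sqrt_div' _ hg.le]
    refine Real.sqrt_le_sqrt ((le_div_iff₀ hg).2 ?_)
    linarith [hsol.potentialEnergy_le_energy2D hL ht]
  have hE : 0 ≤ E := hsol.energy2D_nonneg hL hg.le ht
  calc |virial (1 / 4) L η (psi η ϕ) t|
      ≤ (1 + |1 / 4|) * L * √(∫ x in (0 : ℝ)..L, η t x ^ 2)
          * √(∫ x in (0 : ℝ)..L, psiX η ϕ t x ^ 2) :=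
        abs_virial_le (hsol.isPotentialFlow t ht).contDiff_surface.continuous
          ((contDiff_psi hsol.contDiff_surface hsol.contDiff_potential).of_le one_le_two |>.comp
            (contDiff_prodMk_right t)) hL (hsol.mean_surface t ht)
    _ ≤ (1 + |1 / 4|) * L * (√(2 * E) / √g) * (A * √(2 * E)) := by gcongr
    _ = 5 / 4 * L * A / √g * (√(2 * E) * √(2 * E)) := by
        rw [abs_of_pos (by norm_num)]
        ring
    _ = 5 * L * A / √g * E / 2 := by
        rw [Real.mul_self_sqrt (by positivity)]
        ring

end IsWaterWave

end WaterWaves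

theorem unique_continuation_2d_general {L h g T : ℝ} (hL : 0 < L) (hg : 0 < g) (hT0 : 0 ≤ T)
    {η : ℝ → ℝ → ℝ} {ϕ : ℝ → ℝ → ℝ → ℝ} (hsol : IsWaterWave L h g T η ϕ) {A B : ℝ}
    (hB7 : B < 2 / 7) (hT : 4 / (2 - 7 * B) * (1 + 5 * L * A / √g) ≤ T)
    (hdepth : ∀ t ∈ Icc 0 T, ∀ x ∈ Icc 0 L, 0 ≤ h + 7 / 4 * η t x)
    (hslope : ∀ t ∈ Icc 0 T, ∀ x ∈ Icc 0 L, |etaX η t x| ≤ B)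
    (hpsiX : ∀ t ∈ Icc 0 T,
      √(∫ x in (0 : ℝ)..L, psiX η ϕ t x ^ 2) ≤ A * √(2 * energy2D L h g η ϕ 0))
    (hcontact : ∀ t ∈ Icc 0 T, η t L = 0) :
    energy2D L h g η ϕ 0 = 0
    ∧ ∀ t ∈ Icc 0 T, ∀ x ∈ Icc 0 L,
        η t x = 0 ∧ ∀ y ∈ Icc (-h) (η t x), phiX ϕ t x y = 0 ∧ phiY ϕ t x y = 0 := by
  set E := energy2D L h g η ϕ 0
  set M := virial (1 / 4) L η (psi η ϕ)
  have h0 : (0 : ℝ) ∈ Icc 0 T := left_mem_Icc.2 hT0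
  have hTT : T ∈ Icc 0 T := right_mem_Icc.2 hT0
  have hM : ∀ t ∈ Icc 0 T, DifferentiableAt ℝ M t := fun t ht =>
    (hsol.hasDerivAt_virial_psi hL.le ht (hcontact t ht) _).differentiableAt
  have growth : (2 - 7 * B) / 4 * E * (T - 0) ≤ M T - M 0 :=
    (convex_Icc 0 T).mul_sub_le_image_sub_of_le_deriv
      (fun t ht => (hM t ht).continuousAt.continuousWithinAt)
      (fun t ht => (hM t (interior_subset ht)).differentiableWithinAt)
      (fun t ht => have ht := interior_subset ht
        hsol.mul_energy2D_le_deriv_virial hL.le ht (hcontact t ht) (hdepth t ht) hg.le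
          (hslope t ht))
      0 h0 T hTT hT0
  have bound : ∀ t ∈ Icc 0 T, |M t| ≤ 5 * L * A / √g * E / 2 := fun t ht =>
    hsol.abs_virial_psi_le hL.le hg ht (hpsiX t ht)
  have hE0 : 0 ≤ E := hsol.energy2D_nonneg hL.le hg.le h0
  have long_time : 1 + 5 * L * A / √g ≤ (2 - 7 * B) / 4 * T := by
    rwa [← div_le_iff₀' (by linarith), div_div_eq_mul_div, mul_comm, mul_div_right_comm]
  have crossing : (1 + 5 * L * A / √g) * E ≤ 5 * L * A / √g * E :=
    calc (1 + 5 * L * A / √g) * E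
        ≤ (2 - 7 * B) / 4 * T * E := mul_le_mul_of_nonneg_right long_time hE0
      _ ≤ M T - M 0 := by linarith
      _ ≤ 5 * L * A / √g * E := by
          linarith [le_of_abs_le (bound T hTT), neg_le_of_abs_le (bound 0 h0)]
  have hE : E = 0 := by linarith
  exact ⟨hE, hsol.rest_of_energy2D_eq_zero hL hg hE⟩

/-- unique continuation.  Under the hypotheses of Corollary 1.4,
if the contact point does not move (`η(t,L₁) = 0` for all `t`) then the energy
vanishes, and hence `η ≡ 0` and the velocity `∇_{x,y}ϕ ≡ 0` in the fluid domain. -/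
theorem unique_continuation_2d
    (L₁ h g T : ℝ) (hL : 0 < L₁) (hh : 0 < h) (hg : 0 < g) (hT0 : 0 < T)
    (η : ℝ → ℝ → ℝ) (ϕ : ℝ → ℝ → ℝ → ℝ) (hsol : IsWW2D L₁ h g T η ϕ)
    (A B : ℝ) (hA : 0 < A) (hB : 0 < B) (hB7 : B < 2 / 7)
    (hT : T ≥ 4 / (2 - 7 * B) * (1 + 5 * L₁ * A / Real.sqrt g))
    (hslope : ∀ t ∈ Icc (0:ℝ) T, ∀ x ∈ Icc (0:ℝ) L₁, |etaX η t x| ≤ B)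
    (hpsiL2 : ∀ t ∈ Icc (0:ℝ) T,
      Real.sqrt (∫ x in (0:ℝ)..L₁, (psiX η ϕ t x) ^ 2)
        ≤ A * Real.sqrt (2 * energy2D L₁ h g η ϕ 0))
    (hm : ∀ t ∈ Icc (0:ℝ) T, η t L₁ = 0) :
    energy2D L₁ h g η ϕ 0 = 0
    ∧ (∀ t ∈ Icc (0:ℝ) T, ∀ x ∈ Icc (0:ℝ) L₁,
        η t x = 0
        ∧ ∀ y ∈ Icc (-h) (η t x), phiX ϕ t x y = 0 ∧ phiY ϕ t x y = 0) :=
  unique_continuation_2d_general hL hg hT0.le (hsol.isWaterWave hh) hB7 hT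
    (fun t ht x hx => by linarith [hsol.eta_lower t ht x hx]) hslope hpsiL2 hm
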